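/- arXiv:1812.03031 — 2 statements merged into one kernel-verified Lean document; each statement's English description precedes it below -/
import Mathlib

section
/- For any joint distribution P_{XY} on 𝒳 × 𝒴 with finite output alphabet 𝒴, and any positive integer M < |𝒴|, the quantized mutual information satisfies ((M-1)/|𝒴|) · I(X;Y) ≤ I(X;[Y]_M) ≤ min{ I(X;Y), log M }. -/
/-!
For finite `𝒴`, `I(X;Y)` is the sum over `y` of `D(y) = ∑ₓ p(x,y) log (p(x,y) / (P_X(x) P_Y(y)))`.
The tangent-line bound `a log (a/b) ≥ a - b` makes each `D(y)` nonnegative, while `p(x,y) ≤ P_X(x)`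
gives `D(y) ≤ -P_Y(y) log P_Y(y)`; together they also make the series converge.

For the lower bound, the `M - 1` symbols with the largest `D(y)` carry at least the fraction
`(M - 1) / |𝒴|` of the total. The quantizer that keeps each of them apart and merges all the other
symbols into one leaves these `D(y)` unchanged, and the merged symbol contributes a nonnegative
amount. The upper bounds are the log-sum inequality on the fibres of the quantizer (data
processing) and `I(X;f(Y)) ≤ H(f(Y)) ≤ log M`.
-/

open scoped BigOperators

/-- Mutual information (in bits) of a joint probability mass function `p` on `𝒳 × 𝒴`,
with the convention `0 · log 0 = 0`. -/
noncomputable def miBits {𝒳 𝒴 : Type*} (p : 𝒳 → 𝒴 → ℝ) : ℝ :=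
  ∑' x, ∑' y, p x y * Real.logb 2 (p x y / ((∑' y', p x y') * (∑' x', p x' y)))

/-- `p` is a joint probability mass function. -/
def IsJointPMF {𝒳 𝒴 : Type*} (p : 𝒳 → 𝒴 → ℝ) : Prop :=
  (∀ x y, 0 ≤ p x y) ∧ Summable (fun xy : 𝒳 × 𝒴 => p xy.1 xy.2) ∧ (∑' x, ∑' y, p x y) = 1

/-- Joint pmf of `(X, f(Y))` when `(X,Y) ~ p` and `f` is a deterministic `M`-level quantizer. -/
noncomputable def quantJoint {𝒳 𝒴 : Type*} (p : 𝒳 → 𝒴 → ℝ) {M : ℕ} (f : 𝒴 → Fin M) :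
    𝒳 → Fin M → ℝ :=
  fun x m => ∑' y, if f y = m then p x y else 0

/-- `I(X;[Y]_M)`: the best mutual information achievable by a deterministic `M`-level
quantizer of `Y`. -/
noncomputable def quantMI {𝒳 𝒴 : Type*} (p : 𝒳 → 𝒴 → ℝ) (M : ℕ) : ℝ :=
  ⨆ f : 𝒴 → Fin M, miBits (quantJoint p f)

/-- The information distillation function `ID_M(K, β)`. -/
noncomputable def ID (M K : ℕ) (β : ℝ) : ℝ :=
  sInf {v | ∃ p : Fin K → ℕ → ℝ, IsJointPMF p ∧ β ≤ miBits p ∧ v = quantMI p M}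

/-- Binary entropy function (bits). -/
noncomputable def hBin (t : ℝ) : ℝ :=
  -(t * Real.logb 2 t) - (1 - t) * Real.logb 2 (1 - t)

section LogSum

theorem mul_log_add_sub_mul_le_mul_log_div {a b c : ℝ} (ha : 0 ≤ a) (hb : 0 ≤ b)
    (hab : b = 0 → a = 0) (hc : 0 < c) :
    a * Real.log c + (a - b * c) ≤ a * Real.log (a / b) := by
  rcases ha.eq_or_lt with rfl | ha_pos
  · simpa using mul_nonneg hb hc.le
  have hb_pos : 0 < b := hb.lt_of_ne' (mt hab ha_pos.ne')
  have tangent : b * c * (a / b / c - 1) ≤ b * c * (a / b / c * Real.log (a / b / c)) := by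
    gcongr
    exact Real.self_sub_one_le_mul_log (by positivity)
  rw [Real.log_div (by positivity) hc.ne'] at tangent
  field_simp at tangent
  linarith

/-- The **log-sum inequality**. -/
theorem mul_log_div_le_of_hasSum {ι : Type*} {a b : ι → ℝ} {A B C : ℝ} (ha : ∀ i, 0 ≤ a i)
    (hb : ∀ i, 0 ≤ b i) (hab : ∀ i, b i = 0 → a i = 0) (hA : HasSum a A) (hB : HasSum b B)
    (hC : HasSum (fun i => a i * Real.log (a i / b i)) C) : A * Real.log (A / B) ≤ C := by
  rcases (hA.nonneg ha).eq_or_lt with rfl | hA_pos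
  · obtain rfl : a = 0 := (hasSum_zero_iff_of_nonneg ha).1 hA
    simpa using hC.nonneg fun i => by simp
  have hB_ne : B ≠ 0 := by
    rintro rfl
    have hb0 : b = 0 := (hasSum_zero_iff_of_nonneg hb).1 hB
    obtain rfl : a = 0 := funext fun i => hab i (congrFun hb0 i)
    exact hA_pos.ne (hasSum_zero.unique hA)
  have hc : 0 < A / B := div_pos hA_pos ((hB.nonneg hb).lt_of_ne' hB_ne)
  have tangent := hasSum_le
    (fun i => mul_log_add_sub_mul_le_mul_log_div (ha i) (hb i) (hab i) hc)
    ((hA.mul_right _).add (hA.sub (hB.mul_right _))) hC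
  rwa [mul_div_cancel₀ A hB_ne, sub_self, add_zero] at tangent

theorem sum_mul_log_div_sum_le {ι : Type*} {s : Finset ι} {a b : ι → ℝ}
    (ha : ∀ i ∈ s, 0 ≤ a i) (hb : ∀ i ∈ s, 0 ≤ b i) (hab : ∀ i ∈ s, b i = 0 → a i = 0) :
    (∑ i ∈ s, a i) * Real.log ((∑ i ∈ s, a i) / ∑ i ∈ s, b i) ≤
      ∑ i ∈ s, a i * Real.log (a i / b i) :=
  mul_log_div_le_of_hasSum (fun i : s => ha i i.2) (fun i : s => hb i i.2)
    (fun i : s => hab i i.2) (s.hasSum a) (s.hasSum b)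
    (s.hasSum fun i => a i * Real.log (a i / b i))

theorem sum_negMulLog_le_log_card {ι : Type*} [Fintype ι] {w : ι → ℝ} (hw : ∀ i, 0 ≤ w i)
    (hw_sum : ∑ i, w i = 1) : ∑ i, Real.negMulLog (w i) ≤ Real.log (Fintype.card ι) := by
  have logSum := sum_mul_log_div_sum_le (s := Finset.univ) (b := 1) (fun i _ => hw i)
    (fun _ _ => zero_le_one) (fun _ _ h => absurd h one_ne_zero)
  simp only [hw_sum, Pi.one_apply, Finset.sum_const, Finset.card_univ, nsmul_eq_mul, mul_one,
    div_one, one_mul, one_div, Real.log_inv] at logSum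
  simp only [Real.negMulLog_eq_neg, Finset.sum_neg_distrib]
  linarith

end LogSum

section Averaging

variable {ι R : Type*} [CommRing R] [LinearOrder R] [IsStrictOrderedRing R]

/-- Erasing a smallest element never lowers an average; stated without denominators, so that
`s.erase i` may be empty. -/
theorem exists_card_sub_one_mul_sum_le_card_mul_sum_erase [DecidableEq ι] {s : Finset ι}
    (hs : s.Nonempty) (d : ι → R) :
    ∃ i ∈ s, ((s.card : R) - 1) * ∑ j ∈ s, d j ≤ s.card * ∑ j ∈ s.erase i, d j := by
  obtain ⟨i, hi, hmin⟩ := s.exists_min_image d hs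
  refine ⟨i, hi, ?_⟩
  have min_le_average : s.card * d i ≤ ∑ j ∈ s, d j := by
    simpa only [nsmul_eq_mul] using s.card_nsmul_le_sum d (d i) hmin
  rw [Finset.sum_erase_eq_sub hi]
  linarith

theorem exists_subset_card_eq_mul_sum_le (s : Finset ι) (d : ι → R) {k : ℕ} (hk : k ≤ s.card) :
    ∃ t ⊆ s, t.card = k ∧ (k : R) * ∑ i ∈ s, d i ≤ s.card * ∑ i ∈ t, d i := by
  classical
  induction hk using Nat.decreasingInduction with
  | self => exact ⟨s, subset_rfl, rfl, le_rfl⟩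
  | of_succ k _ ih =>
    obtain ⟨t, hts, ht, heavy⟩ := ih
    have ht_nonempty : t.Nonempty := Finset.card_pos.1 (k.succ_pos.trans_eq ht.symm)
    obtain ⟨i, hi, herase⟩ := exists_card_sub_one_mul_sum_le_card_mul_sum_erase ht_nonempty d
    refine ⟨t.erase i, (t.erase_subset i).trans hts,
      by rw [Finset.card_erase_of_mem hi, ht, Nat.add_sub_cancel], ?_⟩
    rw [ht, Nat.cast_succ, add_sub_cancel_right] at herase
    rw [Nat.cast_succ] at heavy
    refine le_of_mul_le_mul_left ?_ (Nat.cast_add_one_pos (α := R) k)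
    calc ((k : R) + 1) * (k * ∑ j ∈ s, d j) = k * ((k + 1) * ∑ j ∈ s, d j) := by ring
      _ ≤ k * (s.card * ∑ j ∈ t, d j) := by gcongr
      _ = s.card * (k * ∑ j ∈ t, d j) := by ring
      _ ≤ s.card * ((k + 1) * ∑ j ∈ t.erase i, d j) := by gcongr
      _ = (k + 1) * (s.card * ∑ j ∈ t.erase i, d j) := by ring

end Averaging

section SymbolInfo

variable {𝒳 𝒴 : Type*} {p : 𝒳 → 𝒴 → ℝ}

/-- The marginal `P_X` of a joint pmf. -/
noncomputable def marginalFst (p : 𝒳 → 𝒴 → ℝ) (x : 𝒳) : ℝ := ∑' y, p x y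

/-- The marginal `P_Y` of a joint pmf. -/
noncomputable def marginalSnd (p : 𝒳 → 𝒴 → ℝ) (y : 𝒴) : ℝ := ∑' x, p x y

/-- The summand of the mutual information at `(x, y)`, in nats rather than bits. -/
noncomputable def infoTerm (p : 𝒳 → 𝒴 → ℝ) (x : 𝒳) (y : 𝒴) : ℝ :=
  p x y * Real.log (p x y / (marginalFst p x * marginalSnd p y))

/-- The contribution of the symbol `y` to the mutual information, in nats: the mass
`P_Y(y)` times the divergence of `P_{X|Y=y}` from `P_X`. -/
noncomputable def symbolInfo (p : 𝒳 → 𝒴 → ℝ) (y : 𝒴) : ℝ := ∑' x, infoTerm p x y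

namespace IsJointPMF

theorem nonneg (hp : IsJointPMF p) (x : 𝒳) (y : 𝒴) : 0 ≤ p x y := hp.1 x y

theorem summable_left (hp : IsJointPMF p) (y : 𝒴) : Summable fun x => p x y :=
  hp.2.1.prod_symm.prod_factor y

theorem summable_right (hp : IsJointPMF p) (x : 𝒳) : Summable fun y => p x y :=
  hp.2.1.prod_factor x

theorem hasSum_marginalFst (hp : IsJointPMF p) : HasSum (marginalFst p) 1 :=
  hp.2.2 ▸ hp.2.1.prod.hasSum

theorem tsum_marginalSnd (hp : IsJointPMF p) : ∑' y, marginalSnd p y = 1 :=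
  (Summable.tsum_comm (f := p) hp.2.1).trans hp.2.2

theorem marginalFst_nonneg (hp : IsJointPMF p) (x : 𝒳) : 0 ≤ marginalFst p x :=
  tsum_nonneg (hp.nonneg x)

theorem marginalSnd_nonneg (hp : IsJointPMF p) (y : 𝒴) : 0 ≤ marginalSnd p y :=
  tsum_nonneg fun x => hp.nonneg x y

theorem le_marginalFst (hp : IsJointPMF p) (x : 𝒳) (y : 𝒴) : p x y ≤ marginalFst p x :=
  (hp.summable_right x).le_tsum y fun y' _ => hp.nonneg x y'

theorem le_marginalSnd (hp : IsJointPMF p) (x : 𝒳) (y : 𝒴) : p x y ≤ marginalSnd p y :=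
  (hp.summable_left y).le_tsum x fun x' _ => hp.nonneg x' y

theorem marginal_mul_nonneg (hp : IsJointPMF p) (x : 𝒳) (y : 𝒴) :
    0 ≤ marginalFst p x * marginalSnd p y :=
  mul_nonneg (hp.marginalFst_nonneg x) (hp.marginalSnd_nonneg y)

theorem eq_zero_of_marginal_mul_eq_zero (hp : IsJointPMF p) (x : 𝒳) (y : 𝒴)
    (h : marginalFst p x * marginalSnd p y = 0) : p x y = 0 := by
  rcases mul_eq_zero.1 h with hX | hY
  · exact le_antisymm (hX ▸ hp.le_marginalFst x y) (hp.nonneg x y)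
  · exact le_antisymm (hY ▸ hp.le_marginalSnd x y) (hp.nonneg x y)

theorem sub_marginal_mul_le_infoTerm (hp : IsJointPMF p) (x : 𝒳) (y : 𝒴) :
    p x y - marginalFst p x * marginalSnd p y ≤ infoTerm p x y := by
  simpa [infoTerm] using mul_log_add_sub_mul_le_mul_log_div (hp.nonneg x y)
    (hp.marginal_mul_nonneg x y) (hp.eq_zero_of_marginal_mul_eq_zero x y) one_pos

theorem infoTerm_le_mul_neg_log (hp : IsJointPMF p) (x : 𝒳) (y : 𝒴) :
    infoTerm p x y ≤ p x y * -Real.log (marginalSnd p y) := by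
  rcases (hp.nonneg x y).eq_or_lt with hxy | hxy
  · simp [infoTerm, ← hxy]
  have hX : 0 < marginalFst p x := hxy.trans_le (hp.le_marginalFst x y)
  have hY : 0 < marginalSnd p y := hxy.trans_le (hp.le_marginalSnd x y)
  rw [infoTerm, ← Real.log_inv, ← div_div, ← one_div]
  gcongr
  exact (div_le_one hX).2 (hp.le_marginalFst x y)

theorem summable_infoTerm (hp : IsJointPMF p) (y : 𝒴) : Summable fun x => infoTerm p x y := by
  have lower : Summable fun x => p x y - marginalFst p x * marginalSnd p y :=
    (hp.summable_left y).sub (hp.hasSum_marginalFst.summable.mul_right _)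
  have upper : Summable fun x => p x y * -Real.log (marginalSnd p y) :=
    (hp.summable_left y).mul_right _
  have gap := Summable.of_nonneg_of_le
    (fun x => sub_nonneg.2 (hp.sub_marginal_mul_le_infoTerm x y))
    (fun x => sub_le_sub_right (hp.infoTerm_le_mul_neg_log x y) _) (upper.sub lower)
  simpa only [sub_add_cancel] using gap.add lower

theorem symbolInfo_nonneg (hp : IsJointPMF p) (y : 𝒴) : 0 ≤ symbolInfo p y := by
  have masses_cancel :=
    (hp.summable_left y).hasSum.sub (hp.hasSum_marginalFst.mul_right (marginalSnd p y))
  rw [one_mul, marginalSnd, sub_self] at masses_cancel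
  exact hasSum_le (fun x => hp.sub_marginal_mul_le_infoTerm x y) masses_cancel
    (hp.summable_infoTerm y).hasSum

theorem symbolInfo_le_negMulLog (hp : IsJointPMF p) (y : 𝒴) :
    symbolInfo p y ≤ Real.negMulLog (marginalSnd p y) := by
  calc symbolInfo p y ≤ ∑' x, p x y * -Real.log (marginalSnd p y) :=
        (hp.summable_infoTerm y).tsum_le_tsum (fun x => hp.infoTerm_le_mul_neg_log x y)
          ((hp.summable_left y).mul_right _)
    _ = marginalSnd p y * -Real.log (marginalSnd p y) := tsum_mul_right
    _ = Real.negMulLog (marginalSnd p y) := by rw [Real.negMulLog, neg_mul, mul_neg]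

theorem miBits_eq_sum_symbolInfo_div [Fintype 𝒴] (hp : IsJointPMF p) :
    miBits p = (∑ y, symbolInfo p y) / Real.log 2 := by
  calc miBits p = ∑' x, ∑ y, infoTerm p x y / Real.log 2 := by
        simp only [miBits, infoTerm, marginalFst, marginalSnd, Real.logb, mul_div_assoc,
          tsum_fintype]
    _ = (∑' x, ∑ y, infoTerm p x y) / Real.log 2 := by
        simp only [← Finset.sum_div, tsum_div_const]
    _ = (∑ y, symbolInfo p y) / Real.log 2 := by
        rw [Summable.tsum_finsetSum fun y _ => hp.summable_infoTerm y]
        rfl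

theorem miBits_le_logb_card [Fintype 𝒴] (hp : IsJointPMF p) :
    miBits p ≤ Real.logb 2 (Fintype.card 𝒴) := by
  rw [hp.miBits_eq_sum_symbolInfo_div, Real.logb]
  gcongr
  calc ∑ y, symbolInfo p y ≤ ∑ y, Real.negMulLog (marginalSnd p y) :=
        Finset.sum_le_sum fun y _ => hp.symbolInfo_le_negMulLog y
    _ ≤ Real.log (Fintype.card 𝒴) :=
        sum_negMulLog_le_log_card hp.marginalSnd_nonneg
          ((tsum_fintype _).symm.trans hp.tsum_marginalSnd)

end IsJointPMF

end SymbolInfo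

section Quantizer

variable {𝒳 𝒴 : Type*} {p : 𝒳 → 𝒴 → ℝ} {M : ℕ}

theorem exists_map_fin_fiber_eq_singleton {α : Type*} (s : Finset α) :
    ∃ f : α → Fin (s.card + 1), ∀ y ∈ s, ∀ z, f z = f y → z = y := by
  classical
  refine ⟨fun y => if hy : y ∈ s then (s.equivFin ⟨y, hy⟩).castSucc else Fin.last _,
    fun y hy z hz => ?_⟩
  by_cases hzs : z ∈ s
  · simpa [hy, hzs] using hz
  · simp [hy, hzs, (Fin.castSucc_lt_last _).ne'] at hz

theorem le_quantMI [Finite 𝒴] (p : 𝒳 → 𝒴 → ℝ) (f : 𝒴 → Fin M) :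
    miBits (quantJoint p f) ≤ quantMI p M :=
  le_ciSup (Set.finite_range fun g : 𝒴 → Fin M => miBits (quantJoint p g)).bddAbove f

theorem quantJoint_eq_sum_fiber [Fintype 𝒴] (p : 𝒳 → 𝒴 → ℝ) (f : 𝒴 → Fin M) (x : 𝒳)
    (m : Fin M) : quantJoint p f x m = ∑ y with f y = m, p x y := by
  rw [quantJoint, tsum_fintype, Finset.sum_filter]

namespace IsJointPMF

theorem marginalFst_quantJoint (hp : IsJointPMF p) (f : 𝒴 → Fin M) :
    marginalFst (quantJoint p f) = marginalFst p := by
  funext x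
  have summable_fiber : ∀ m, Summable fun y => if f y = m then p x y else 0 := fun m =>
    .of_nonneg_of_le (fun y => ite_nonneg (hp.nonneg x y) le_rfl)
      (fun y => by split_ifs; exacts [le_rfl, hp.nonneg x y]) (hp.summable_right x)
  calc marginalFst (quantJoint p f) x = ∑ m, ∑' y, if f y = m then p x y else 0 :=
        tsum_fintype _
    _ = ∑' y, ∑ m, if f y = m then p x y else 0 :=
        (Summable.tsum_finsetSum fun m _ => summable_fiber m).symm
    _ = marginalFst p x := by simp only [Finset.sum_ite_eq, Finset.mem_univ, if_true, marginalFst]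

protected theorem quantJoint (hp : IsJointPMF p) (f : 𝒴 → Fin M) :
    IsJointPMF (quantJoint p f) := by
  have nonneg : ∀ x m, 0 ≤ quantJoint p f x m := fun x m =>
    tsum_nonneg fun y => ite_nonneg (hp.nonneg x y) le_rfl
  have total : HasSum (fun x => ∑' m, quantJoint p f x m) 1 := by
    have hasSum_fst := hp.hasSum_marginalFst
    rwa [← hp.marginalFst_quantJoint f] at hasSum_fst
  exact ⟨nonneg, (summable_prod_of_nonneg fun xm => nonneg xm.1 xm.2).2
    ⟨fun _ => (hasSum_fintype _).summable, total.summable⟩, total.tsum_eq⟩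

theorem symbolInfo_quantJoint_of_fiber_eq_singleton (hp : IsJointPMF p) {f : 𝒴 → Fin M} {y : 𝒴}
    (hy : ∀ z, f z = f y → z = y) : symbolInfo (quantJoint p f) (f y) = symbolInfo p y := by
  have column : ∀ x, quantJoint p f x (f y) = p x y := fun x =>
    (tsum_eq_single y fun z hz => if_neg (mt (hy z) hz)).trans (if_pos rfl)
  simp only [symbolInfo, infoTerm, marginalSnd, hp.marginalFst_quantJoint, column]

theorem exists_sum_symbolInfo_le_quantJoint (hp : IsJointPMF p) (s : Finset 𝒴) :
    ∃ f : 𝒴 → Fin (s.card + 1),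
      ∑ y ∈ s, symbolInfo p y ≤ ∑ m, symbolInfo (quantJoint p f) m := by
  obtain ⟨f, hf⟩ := exists_map_fin_fiber_eq_singleton s
  refine ⟨f, ?_⟩
  calc ∑ y ∈ s, symbolInfo p y = ∑ y ∈ s, symbolInfo (quantJoint p f) (f y) :=
        Finset.sum_congr rfl fun y hy =>
          (hp.symbolInfo_quantJoint_of_fiber_eq_singleton (hf y hy)).symm
    _ = ∑ m ∈ s.image f, symbolInfo (quantJoint p f) m :=
        (Finset.sum_image fun y _ z hz hyz => hf z hz y hyz).symm
    _ ≤ ∑ m, symbolInfo (quantJoint p f) m :=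
        Finset.sum_le_univ_sum_of_nonneg (hp.quantJoint f).symbolInfo_nonneg

theorem marginalSnd_quantJoint [Fintype 𝒴] (hp : IsJointPMF p) (f : 𝒴 → Fin M) (m : Fin M) :
    marginalSnd (quantJoint p f) m = ∑ y with f y = m, marginalSnd p y := by
  simp only [marginalSnd, quantJoint_eq_sum_fiber]
  exact Summable.tsum_finsetSum fun y _ => hp.summable_left y

theorem infoTerm_quantJoint_le [Fintype 𝒴] (hp : IsJointPMF p) (f : 𝒴 → Fin M) (x : 𝒳)
    (m : Fin M) : infoTerm (quantJoint p f) x m ≤ ∑ y with f y = m, infoTerm p x y := by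
  rw [infoTerm, hp.marginalFst_quantJoint, hp.marginalSnd_quantJoint, quantJoint_eq_sum_fiber,
    Finset.mul_sum]
  exact sum_mul_log_div_sum_le (fun y _ => hp.nonneg x y)
    (fun y _ => hp.marginal_mul_nonneg x y)
    (fun y _ => hp.eq_zero_of_marginal_mul_eq_zero x y)

theorem symbolInfo_quantJoint_le [Fintype 𝒴] (hp : IsJointPMF p) (f : 𝒴 → Fin M) (m : Fin M) :
    symbolInfo (quantJoint p f) m ≤ ∑ y with f y = m, symbolInfo p y :=
  hasSum_le (fun x => hp.infoTerm_quantJoint_le f x m)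
    ((hp.quantJoint f).summable_infoTerm m).hasSum
    (hasSum_sum fun y _ => (hp.summable_infoTerm y).hasSum)

/-- The **data processing inequality** for deterministic quantizers. -/
theorem miBits_quantJoint_le [Finite 𝒴] (hp : IsJointPMF p) (f : 𝒴 → Fin M) :
    miBits (quantJoint p f) ≤ miBits p := by
  cases nonempty_fintype 𝒴
  rw [(hp.quantJoint f).miBits_eq_sum_symbolInfo_div,
    hp.miBits_eq_sum_symbolInfo_div, ← Finset.sum_fiberwise Finset.univ f]
  gcongr with m
  exact hp.symbolInfo_quantJoint_le f m

theorem card_div_mul_miBits_le_quantMI [Fintype 𝒴] (hp : IsJointPMF p) {k : ℕ}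
    (hk : k ≤ Fintype.card 𝒴) : (k : ℝ) / Fintype.card 𝒴 * miBits p ≤ quantMI p (k + 1) := by
  obtain ⟨s, -, rfl, heavy⟩ :=
    exists_subset_card_eq_mul_sum_le Finset.univ (symbolInfo p) hk
  obtain ⟨f, hf⟩ := hp.exists_sum_symbolInfo_le_quantJoint s
  calc (s.card : ℝ) / Fintype.card 𝒴 * miBits p
      = s.card * (∑ y, symbolInfo p y) / Fintype.card 𝒴 / Real.log 2 := by
        rw [hp.miBits_eq_sum_symbolInfo_div]
        ring
    _ ≤ (∑ y ∈ s, symbolInfo p y) / Real.log 2 := by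
        gcongr
        exact div_le_of_le_mul₀ (Nat.cast_nonneg _)
          (Finset.sum_nonneg fun y _ => hp.symbolInfo_nonneg y) (heavy.trans_eq (mul_comm _ _))
    _ ≤ miBits (quantJoint p f) := by
        rw [(hp.quantJoint f).miBits_eq_sum_symbolInfo_div]
        gcongr
    _ ≤ quantMI p (s.card + 1) := le_quantMI p f

end IsJointPMF

end Quantizer

theorem simple_bounds_general {𝒳 𝒴 : Type*} [Fintype 𝒴] (p : 𝒳 → 𝒴 → ℝ) (hp : IsJointPMF p)
    (M : ℕ) (hM : 0 < M) (hMY : M ≤ Fintype.card 𝒴 + 1) :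
    ((M : ℝ) - 1) / (Fintype.card 𝒴 : ℝ) * miBits p ≤ quantMI p M ∧
    quantMI p M ≤ min (miBits p) (Real.logb 2 M) := by
  obtain ⟨k, rfl⟩ := Nat.exists_eq_succ_of_ne_zero hM.ne'
  constructor
  · simpa using hp.card_div_mul_miBits_le_quantMI (Nat.succ_le_succ_iff.1 hMY)
  · exact ciSup_le fun f => le_min (hp.miBits_quantJoint_le f)
      (by simpa using (hp.quantJoint f).miBits_le_logb_card)

/-- Proposition 1 (Simple bounds): for finite `𝒴` and `M < |𝒴|`,
`((M-1)/|𝒴|) I(X;Y) ≤ I(X;[Y]_M) ≤ min{I(X;Y), log M}`. -/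
theorem simple_bounds {𝒳 𝒴 : Type*} [Countable 𝒳] [Fintype 𝒴]
    (p : 𝒳 → 𝒴 → ℝ) (hp : IsJointPMF p) (M : ℕ) (hM : 0 < M)
    (hMY : M < Fintype.card 𝒴) :
    ((M : ℝ) - 1) / (Fintype.card 𝒴 : ℝ) * miBits p ≤ quantMI p M ∧
    quantMI p M ≤ min (miBits p) (Real.logb 2 M) :=
  simple_bounds_general p hp M hM (by omega)
end

section
/- For all 3/5 ≤ β ≤ 1, the binary information distillation function with two quantization levels satisfies 1 - h((1-β)/2) ≤ ID_2(2, β) ≤ 1 - ((2-β)/2) · h((1-β)/(2-β)). -/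
/-!
Write `H(X|Y) = ∑ y, massEntropy (p · y)`, where `massEntropy` is the homogeneous extension of the
Shannon entropy to unnormalized mass functions, so that `I(X;Y) = H(X) - H(X|Y)`.

*Lower bound.*  Quantize `Y` by the maximum a posteriori decision, whose error probability is
`e = ∑ y, min (p 0 y) (p 1 y)`.  Concavity of `h` gives `2 e ≤ H(X|Y)`, and Fano's inequality
gives `H(X|f(Y)) ≤ h(e)`.  Hence `I(X;f(Y)) ≥ H(X) - h(e) ≥ I(X;Y) + 2 e - h(e)`.  The function
`2 e - h(e)` is antitone on `[0, 1/5]`, because `h' ≥ 2` there, and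
`e ≤ H(X|Y) / 2 ≤ (1 - β) / 2 ≤ 1/5`, which is where `β ≥ 3/5` enters.

*Upper bound.*  Let `X` be a uniform bit seen through an erasure channel with erasure probability
`1 - β`, so that `I(X;Y) = β`.  A quantizer that separates the letters `0` and `1` has to merge the
erasure symbol with one of them, and the merged letter alone accounts for the conditional entropy
in the bound; a quantizer that does not separate them carries no information.
-/

open scoped BigOperators

/-! ### The binary entropy function -/

lemma hBin_eq_binEntropy_div_log_two (t : ℝ) : hBin t = Real.binEntropy t / Real.log 2 := by
  simp only [hBin, Real.binEntropy_eq_negMulLog_add_negMulLog_one_sub, Real.negMulLog, Real.logb]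
  ring

lemma hBin_le_one (t : ℝ) : hBin t ≤ 1 := by
  rw [hBin_eq_binEntropy_div_log_two, div_le_one (Real.log_pos one_lt_two)]
  exact Real.binEntropy_le_log_two

lemma two_mul_le_hBin {t : ℝ} (ht₀ : 0 ≤ t) (ht : t ≤ 1 / 2) : 2 * t ≤ hBin t := by
  have chord : (1 - 2 * t) • Real.binEntropy 0 + (2 * t) • Real.binEntropy 2⁻¹ ≤
      Real.binEntropy ((1 - 2 * t) • 0 + (2 * t) • 2⁻¹) :=
    Real.strictConcave_binEntropy.concaveOn.2 (by norm_num) (by norm_num)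
      (by linarith) (by linarith) (by ring)
  have midpoint : (1 - 2 * t) • 0 + (2 * t) • 2⁻¹ = t := by simp only [smul_eq_mul]; ring
  rw [midpoint, Real.binEntropy_zero, Real.binEntropy_two_inv, smul_zero, zero_add,
    smul_eq_mul] at chord
  rwa [hBin_eq_binEntropy_div_log_two, le_div_iff₀ (Real.log_pos one_lt_two)]

lemma hasDerivAt_hBin {s : ℝ} (h₀ : s ≠ 0) (h₁ : s ≠ 1) :
    HasDerivAt hBin (Real.logb 2 (1 - s) - Real.logb 2 s) s := by
  rw [funext hBin_eq_binEntropy_div_log_two, Real.logb, Real.logb, ← sub_div]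
  exact (Real.hasDerivAt_binEntropy h₀ h₁).div_const _

lemma continuous_hBin : Continuous hBin := by
  rw [funext hBin_eq_binEntropy_div_log_two]
  fun_prop

/-- The right end point is where the derivative `log₂ ((1 - s) / s)` of `h` equals `c`. -/
lemma antitoneOn_const_mul_sub_hBin (c : ℝ) :
    AntitoneOn (fun s => c * s - hBin s) (Set.Icc 0 (1 / (1 + 2 ^ c))) := by
  have hpow : (0 : ℝ) < 2 ^ c := Real.rpow_pos_of_pos two_pos c
  refine antitoneOn_of_hasDerivWithinAt_nonpos
    (f' := fun s => c * 1 - (Real.logb 2 (1 - s) - Real.logb 2 s)) (convex_Icc _ _)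
    ((continuous_const_mul c).sub continuous_hBin).continuousOn (fun s hs => ?_) fun s hs => ?_
  all_goals
    rw [interior_Icc] at hs
    obtain ⟨hs₀, hs₁⟩ := hs
    rw [lt_div_iff₀ (by positivity)] at hs₁
    have hs_lt : s < 1 := by nlinarith
  · exact (((hasDerivAt_id s).const_mul c).sub
      (hasDerivAt_hBin hs₀.ne' hs_lt.ne)).hasDerivWithinAt
  · have slope : c ≤ Real.logb 2 ((1 - s) / s) := by
      rw [Real.le_logb_iff_rpow_le one_lt_two (div_pos (by linarith) hs₀), le_div_iff₀ hs₀]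
      linarith
    rw [Real.logb_div (by linarith) hs₀.ne'] at slope
    linarith

/-! ### The log-sum inequality -/

lemma mul_logb_div_nonneg {a c : ℝ} (ha : 0 ≤ a) (hac : a ≤ c) : 0 ≤ a * Real.logb 2 (c / a) := by
  rcases ha.eq_or_lt with rfl | ha
  · simp
  · exact mul_nonneg ha.le (Real.logb_nonneg one_lt_two ((one_le_div ha).2 hac))

lemma mul_logb_div_le_tangent {a c r : ℝ} (ha : 0 ≤ a) (hac : a ≤ c) (hr : 0 < r) :
    a * Real.logb 2 (c / a) ≤ a * Real.logb 2 r + (c / r - a) / Real.log 2 := by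
  rcases ha.eq_or_lt with rfl | ha
  · have := Real.log_pos one_lt_two
    rw [zero_mul, zero_mul, zero_add, sub_zero]
    positivity
  have tangent : Real.log (c / a) - Real.log r ≤ c / a / r - 1 := by
    have hc : 0 < c := ha.trans_le hac
    rw [← Real.log_div (by positivity) hr.ne']
    exact Real.log_le_sub_one_of_pos (by positivity)
  have hscaled : a * Real.log (c / a) ≤ a * Real.log r + (c / r - a) := by
    have := mul_le_mul_of_nonneg_left tangent ha.le
    have : a * (c / a / r - 1) = c / r - a := by field_simp
    linarith
  rw [Real.logb, Real.logb, ← mul_div_assoc, ← mul_div_assoc, ← add_div]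
  exact div_le_div_of_nonneg_right hscaled (Real.log_pos one_lt_two).le

section LogSum

variable {ι : Type*} {a c : ι → ℝ}

lemma summable_mul_logb_div (ha : ∀ i, 0 ≤ a i) (hac : ∀ i, a i ≤ c i) (hc : Summable c) :
    Summable fun i => a i * Real.logb 2 (c i / a i) :=
  .of_nonneg_of_le (fun i => mul_logb_div_nonneg (ha i) (hac i))
    (fun i => mul_logb_div_le_tangent (ha i) (hac i) one_pos)
    (((hc.of_nonneg_of_le ha hac).mul_right _).add
      (((hc.div_const 1).sub (hc.of_nonneg_of_le ha hac)).div_const _))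

theorem tsum_mul_logb_div_le (ha : ∀ i, 0 ≤ a i) (hac : ∀ i, a i ≤ c i) (hc : Summable c) :
    ∑' i, a i * Real.logb 2 (c i / a i) ≤
      (∑' i, a i) * Real.logb 2 ((∑' i, c i) / ∑' i, a i) := by
  have hsa : Summable a := hc.of_nonneg_of_le ha hac
  rcases (tsum_nonneg ha).eq_or_lt with hA | hA
  · have hzero : a = 0 := (hasSum_zero_iff_of_nonneg ha).1 (hA ▸ hsa.hasSum)
    simp [hzero]
  set A := ∑' i, a i
  set C := ∑' i, c i
  have hC : 0 < C := hA.trans_le (hsa.tsum_le_tsum hac hc)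
  have hexcess : Summable fun i => (c i / (C / A) - a i) / Real.log 2 :=
    ((hc.div_const _).sub hsa).div_const _
  calc ∑' i, a i * Real.logb 2 (c i / a i)
      ≤ ∑' i, (a i * Real.logb 2 (C / A) + (c i / (C / A) - a i) / Real.log 2) :=
        (summable_mul_logb_div ha hac hc).tsum_le_tsum
          (fun i => mul_logb_div_le_tangent (ha i) (hac i) (div_pos hC hA))
          ((hsa.mul_right _).add hexcess)
    _ = A * Real.logb 2 (C / A) + (C / (C / A) - A) / Real.log 2 := by
        rw [(hsa.mul_right _).tsum_add hexcess, tsum_mul_right, tsum_div_const,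
          (hc.div_const _).tsum_sub hsa, tsum_div_const]
    _ = A * Real.logb 2 (C / A) := by
        rw [div_div_cancel₀ hC.ne', sub_self, zero_div, add_zero]

lemma tsum_mul_logb_div_tsum_mul (ha : ∀ i, 0 ≤ a i) (hac : ∀ i, a i ≤ c i) (hc : Summable c) :
    ∑' i, a i * Real.logb 2 (a i / ((∑' j, a j) * c i)) =
      (∑' i, a i) * Real.logb 2 (1 / ∑' i, a i) - ∑' i, a i * Real.logb 2 (c i / a i) := by
  have hsa : Summable a := hc.of_nonneg_of_le ha hac
  rw [← tsum_mul_right, ← (hsa.mul_right _).tsum_sub (summable_mul_logb_div ha hac hc)]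
  refine tsum_congr fun i => ?_
  rcases (ha i).eq_or_lt with hi | hi
  · simp [← hi]
  · have hA : 0 < ∑' j, a j := hsa.tsum_pos ha i hi
    have hci : 0 < c i := hi.trans_le (hac i)
    rw [← mul_sub, ← Real.logb_div (by positivity) (by positivity)]
    congr 2
    field_simp

end LogSum

/-! ### Entropy of mass functions -/

/-- The entropy in bits of a finite mass function `w`, not necessarily of total mass one: the total
mass of `w` times the Shannon entropy of the normalized distribution. -/
noncomputable def massEntropy {𝒳 : Type*} [Fintype 𝒳] (w : 𝒳 → ℝ) : ℝ :=
  ∑ x, w x * Real.logb 2 ((∑ x', w x') / w x)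

section MassEntropy

variable {𝒳 : Type*} [Fintype 𝒳] {w : 𝒳 → ℝ}

lemma massEntropy_nonneg (hw : ∀ x, 0 ≤ w x) : 0 ≤ massEntropy w :=
  Finset.sum_nonneg fun x hx =>
    mul_logb_div_nonneg (hw x) (Finset.single_le_sum (fun x' _ => hw x') hx)

lemma massEntropy_comp_equiv (e : 𝒳 ≃ 𝒳) (w : 𝒳 → ℝ) :
    massEntropy (fun x => w (e x)) = massEntropy w := by
  simp only [massEntropy, e.sum_comp w]
  exact e.sum_comp fun x => w x * Real.logb 2 ((∑ x', w x') / w x)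

lemma massEntropy_of_subsingleton_support (hw : w.support.Subsingleton) : massEntropy w = 0 := by
  refine Finset.sum_eq_zero fun x _ => ?_
  rcases eq_or_ne (w x) 0 with hx | hx
  · rw [hx, zero_mul]
  · have hsum : ∑ x', w x' = w x := Finset.sum_eq_single_of_mem x (Finset.mem_univ x)
      fun x' _ hne => by_contra fun hx' => hne (hw hx' hx)
    rw [hsum, div_self hx, Real.logb_one, mul_zero]

lemma massEntropy_fin_two (w : Fin 2 → ℝ) (i : Fin 2) :
    massEntropy w = (∑ x, w x) * hBin (w i / ∑ x, w x) := by
  have hlog (x : Fin 2) : Real.logb 2 ((∑ x', w x') / w x) = -Real.logb 2 (w x / ∑ x', w x') := by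
    rw [← inv_div, Real.logb_inv]
  simp only [massEntropy, hlog]
  by_cases hS : ∑ x, w x = 0
  · simp only [hS, div_zero, Real.logb_zero, neg_zero, mul_zero, zero_mul, Finset.sum_const_zero]
  · have hsplit (g : Fin 2 → ℝ) : ∑ x, g x = g i + g (1 - i) :=
      Fintype.sum_eq_add i (1 - i) (by omega) (by omega)
    have hcompl : 1 - w i / ∑ x, w x = w (1 - i) / ∑ x, w x := by
      rw [one_sub_div hS, sub_eq_of_eq_add' (hsplit w)]
    rw [hBin, hcompl, hsplit fun x => w x * _]
    field_simp
    ring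

lemma massEntropy_fin_two_of_sum_eq_one {w : Fin 2 → ℝ} (hsum : ∑ x, w x = 1) (i : Fin 2) :
    massEntropy w = hBin (w i) := by
  rw [massEntropy_fin_two w i, hsum, one_mul, div_one]

lemma massEntropy_fin_two_le_sum {w : Fin 2 → ℝ} (hw : ∀ x, 0 ≤ w x) :
    massEntropy w ≤ ∑ x, w x := by
  rw [massEntropy_fin_two w 0]
  exact mul_le_of_le_one_right (Finset.sum_nonneg fun x _ => hw x) (hBin_le_one _)

lemma two_mul_min_le_massEntropy {w : Fin 2 → ℝ} (hw : ∀ x, 0 ≤ w x) :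
    2 * min (w 0) (w 1) ≤ massEntropy w := by
  suffices hminor : ∀ i, 2 * w i ≤ ∑ x, w x → 2 * w i ≤ massEntropy w by
    simp only [Fin.sum_univ_two] at hminor
    rcases le_total (w 0) (w 1) with h | h
    · rw [min_eq_left h]
      exact hminor 0 (by linarith)
    · rw [min_eq_right h]
      exact hminor 1 (by linarith)
  intro i hi
  rcases (Finset.sum_nonneg fun x _ => hw x).eq_or_lt with hS | hS
  · linarith [massEntropy_nonneg hw]
  calc 2 * w i = (∑ x, w x) * (2 * (w i / ∑ x, w x)) := by field_simp
    _ ≤ (∑ x, w x) * hBin (w i / ∑ x, w x) := by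
        refine mul_le_mul_of_nonneg_left (two_mul_le_hBin (div_nonneg (hw i) hS.le) ?_) hS.le
        rw [div_le_iff₀ hS]
        linarith
    _ = massEntropy w := (massEntropy_fin_two w i).symm

end MassEntropy

/-! ### Mutual information and conditional entropy -/

/-- The entropy `H(X)` in bits of the first marginal of the joint mass function `p`. -/
noncomputable def margEntropy {𝒳 𝒴 : Type*} [Fintype 𝒳] (p : 𝒳 → 𝒴 → ℝ) : ℝ :=
  massEntropy fun x => ∑' y, p x y

/-- The conditional entropy `H(X|Y)` in bits of the joint mass function `p`; the term of a letter
`y` already carries the weight `P(Y = y)`, since `massEntropy` is homogeneous. -/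
noncomputable def condEntropy {𝒳 𝒴 : Type*} [Fintype 𝒳] (p : 𝒳 → 𝒴 → ℝ) : ℝ :=
  ∑' y, massEntropy fun x => p x y

section MutualInformation

variable {𝒳 𝒴 : Type*} [Fintype 𝒳] {p : 𝒳 → 𝒴 → ℝ}

lemma summable_massEntropy (hp : ∀ x y, 0 ≤ p x y) (hs : ∀ x, Summable (p x)) :
    Summable fun y => massEntropy fun x => p x y :=
  summable_sum fun x hx => summable_mul_logb_div (hp x)
    (fun y => Finset.single_le_sum (fun x' _ => hp x' y) hx) (summable_sum fun x' _ => hs x')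

lemma condEntropy_nonneg (hp : ∀ x y, 0 ≤ p x y) : 0 ≤ condEntropy p :=
  tsum_nonneg fun y => massEntropy_nonneg fun x => hp x y

lemma massEntropy_le_condEntropy (hp : ∀ x y, 0 ≤ p x y) (hs : ∀ x, Summable (p x)) (y : 𝒴) :
    massEntropy (fun x => p x y) ≤ condEntropy p :=
  (summable_massEntropy hp hs).le_tsum y fun y' _ => massEntropy_nonneg fun x => hp x y'

lemma condEntropy_eq_sum_tsum (hp : ∀ x y, 0 ≤ p x y) (hs : ∀ x, Summable (p x)) :
    condEntropy p = ∑ x, ∑' y, p x y * Real.logb 2 ((∑ x', p x' y) / p x y) :=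
  Summable.tsum_finsetSum fun x hx => summable_mul_logb_div (hp x)
    (fun y => Finset.single_le_sum (fun x' _ => hp x' y) hx) (summable_sum fun x' _ => hs x')

theorem condEntropy_le_margEntropy (hp : ∀ x y, 0 ≤ p x y) (hs : ∀ x, Summable (p x)) :
    condEntropy p ≤ margEntropy p := by
  rw [condEntropy_eq_sum_tsum hp hs, margEntropy, massEntropy,
    ← Summable.tsum_finsetSum fun x _ => hs x]
  exact Finset.sum_le_sum fun x hx => tsum_mul_logb_div_le (hp x)
    (fun y => Finset.single_le_sum (fun x' _ => hp x' y) hx) (summable_sum fun x' _ => hs x')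

lemma isJointPMF_iff_of_fintype :
    IsJointPMF p ↔ (∀ x y, 0 ≤ p x y) ∧ (∀ x, Summable (p x)) ∧ ∑ x, ∑' y, p x y = 1 := by
  rw [IsJointPMF, tsum_fintype]
  refine and_congr_right fun hp => and_congr_left fun _ => ?_
  rw [summable_prod_of_nonneg fun xy => hp xy.1 xy.2]
  exact and_iff_left Summable.of_finite

lemma IsJointPMF.miBits_eq (hp : IsJointPMF p) : miBits p = margEntropy p - condEntropy p := by
  obtain ⟨hnonneg, hs, hone⟩ := isJointPMF_iff_of_fintype.1 hp
  rw [condEntropy_eq_sum_tsum hnonneg hs, margEntropy, massEntropy, hone,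
    ← Finset.sum_sub_distrib]
  simp only [miBits, tsum_fintype]
  exact Finset.sum_congr rfl fun x hx => tsum_mul_logb_div_tsum_mul (hnonneg x)
    (fun y => Finset.single_le_sum (fun x' _ => hnonneg x' y) hx)
    (summable_sum fun x' _ => hs x')

lemma IsJointPMF.miBits_nonneg {𝒳 : Type*} [Finite 𝒳] {p : 𝒳 → 𝒴 → ℝ} (hp : IsJointPMF p) :
    0 ≤ miBits p := by
  have := Fintype.ofFinite 𝒳
  obtain ⟨hnonneg, hs, -⟩ := isJointPMF_iff_of_fintype.1 hp
  rw [hp.miBits_eq]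
  exact sub_nonneg.2 (condEntropy_le_margEntropy hnonneg hs)

lemma margEntropy_fin_two_of_sum_eq_one {p : Fin 2 → 𝒴 → ℝ} (hone : ∑ x, ∑' y, p x y = 1) :
    margEntropy p = hBin (∑' y, p 1 y) :=
  massEntropy_fin_two_of_sum_eq_one hone 1

end MutualInformation

/-! ### Quantizers -/

section Quantizer

variable {𝒳 𝒴 : Type*} {p : 𝒳 → 𝒴 → ℝ} {M : ℕ}

lemma summable_ite_quantizer {q : 𝒴 → ℝ} (hq : Summable q) (f : 𝒴 → Fin M) (m : Fin M) :
    Summable fun y => if f y = m then q y else 0 := by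
  classical
  refine (hq.indicator (f ⁻¹' {m})).congr fun y => ?_
  simp only [Set.indicator_apply, Set.mem_preimage, Set.mem_singleton_iff]

lemma sum_quantJoint {x : 𝒳} (hs : Summable (p x)) (f : 𝒴 → Fin M) :
    ∑ m, quantJoint p f x m = ∑' y, p x y := by
  simp only [quantJoint]
  rw [← Summable.tsum_finsetSum fun m _ => summable_ite_quantizer hs f m]
  simp only [Finset.sum_ite_eq, Finset.mem_univ, if_true]

lemma isJointPMF_quantJoint [Finite 𝒳] (hp : IsJointPMF p) (f : 𝒴 → Fin M) :
    IsJointPMF (quantJoint p f) := by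
  have := Fintype.ofFinite 𝒳
  obtain ⟨hnonneg, hs, hone⟩ := isJointPMF_iff_of_fintype.1 hp
  refine isJointPMF_iff_of_fintype.2 ⟨fun x m => tsum_nonneg fun y => ?_,
    fun x => Summable.of_finite, ?_⟩
  · exact ite_nonneg (hnonneg x y) le_rfl
  · simpa only [tsum_fintype, sum_quantJoint (hs _)] using hone

lemma IsJointPMF.miBits_quantJoint [Fintype 𝒳] (hp : IsJointPMF p) (f : 𝒴 → Fin M) :
    miBits (quantJoint p f) = margEntropy p - condEntropy (quantJoint p f) := by
  have hs := (isJointPMF_iff_of_fintype.1 hp).2.1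
  rw [(isJointPMF_quantJoint hp f).miBits_eq, margEntropy, margEntropy]
  simp only [tsum_fintype, sum_quantJoint (hs _)]

lemma IsJointPMF.miBits_quantJoint_le_quantMI [Finite 𝒳] (hp : IsJointPMF p) (f : 𝒴 → Fin M) :
    miBits (quantJoint p f) ≤ quantMI p M := by
  have := Fintype.ofFinite 𝒳
  refine le_ciSup (f := fun g : 𝒴 → Fin M => miBits (quantJoint p g))
    ⟨margEntropy p, ?_⟩ f
  rintro _ ⟨g, rfl⟩
  simp only [hp.miBits_quantJoint g]
  exact sub_le_self _ (condEntropy_nonneg (isJointPMF_quantJoint hp g).1)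

lemma IsJointPMF.quantMI_nonneg [Finite 𝒳] (hp : IsJointPMF p) (M : ℕ) : 0 ≤ quantMI p M :=
  Real.iSup_nonneg fun f => (isJointPMF_quantJoint hp f).miBits_nonneg

lemma ID_le_quantMI {K : ℕ} {β : ℝ} {p : Fin K → ℕ → ℝ} (hp : IsJointPMF p)
    (hβ : β ≤ miBits p) (M : ℕ) : ID M K β ≤ quantMI p M := by
  refine csInf_le ⟨0, ?_⟩ ⟨p, hp, hβ, rfl⟩
  rintro _ ⟨q, hq, -, rfl⟩
  exact hq.quantMI_nonneg M

end Quantizer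

/-! ### Maximum a posteriori quantization of a binary source -/

/-- The error probability of the optimal guess of a bit `X` from `Y`. -/
noncomputable def bayesError {𝒴 : Type*} (p : Fin 2 → 𝒴 → ℝ) : ℝ :=
  ∑' y, min (p 0 y) (p 1 y)

/-- The maximum a posteriori guess of a bit `X` from `Y`, with ties resolved in favour of `0`. -/
noncomputable def mapQuantizer {𝒴 : Type*} (p : Fin 2 → 𝒴 → ℝ) (y : 𝒴) : Fin 2 :=
  if p 1 y ≤ p 0 y then 0 else 1

section MaximumAPosteriori

variable {𝒴 : Type*} {p : Fin 2 → 𝒴 → ℝ}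

lemma two_mul_bayesError_le_condEntropy (hp : ∀ x y, 0 ≤ p x y) (hs : ∀ x, Summable (p x)) :
    2 * bayesError p ≤ condEntropy p := by
  have hmin : Summable fun y => min (p 0 y) (p 1 y) :=
    (hs 0).of_nonneg_of_le (fun y => le_min (hp 0 y) (hp 1 y)) fun y => min_le_left _ _
  rw [bayesError, ← tsum_mul_left]
  exact (hmin.mul_left 2).tsum_le_tsum (fun y => two_mul_min_le_massEntropy fun x => hp x y)
    (summable_massEntropy hp hs)

/-- Fano's inequality for a bit and its guess: pass from the joint law of `(X, X')` to that of
`(X + X', X')`, which has the same conditional entropy, and drop the conditioning. -/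
lemma IsJointPMF.condEntropy_le_hBin_error {q : Fin 2 → Fin 2 → ℝ} (hq : IsJointPMF q) :
    condEntropy q ≤ hBin (q 0 1 + q 1 0) := by
  have hone := (isJointPMF_iff_of_fintype.1 hq).2.2
  have hone_err : ∑ e, ∑' m, q (e + m) m = 1 := by
    simp only [tsum_fintype, Fin.sum_univ_two, add_zero, zero_add,
      show (1 : Fin 2) + 1 = 0 from rfl] at hone ⊢
    linarith
  calc condEntropy q = condEntropy fun e m => q (e + m) m :=
        tsum_congr fun m => (massEntropy_comp_equiv (Equiv.addRight m) fun x => q x m).symm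
    _ ≤ margEntropy fun e m => q (e + m) m :=
        condEntropy_le_margEntropy (fun e m => hq.1 (e + m) m) fun e => Summable.of_finite
    _ = hBin (q 0 1 + q 1 0) := by
        rw [margEntropy_fin_two_of_sum_eq_one hone_err, tsum_fintype, Fin.sum_univ_two, add_comm]
        simp

lemma quantJoint_mapQuantizer_error (hs : ∀ x, Summable (p x)) :
    quantJoint p (mapQuantizer p) 0 1 + quantJoint p (mapQuantizer p) 1 0 = bayesError p := by
  rw [quantJoint, quantJoint, ← (summable_ite_quantizer (hs 0) _ 1).tsum_add
    (summable_ite_quantizer (hs 1) _ 0)]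
  refine tsum_congr fun y => ?_
  by_cases hy : p 1 y ≤ p 0 y
  · simp [mapQuantizer, hy]
  · simp [mapQuantizer, hy, (not_le.1 hy).le]

lemma IsJointPMF.miBits_add_two_mul_bayesError_le (hp : IsJointPMF p) :
    miBits p + (2 * bayesError p - hBin (bayesError p)) ≤
      miBits (quantJoint p (mapQuantizer p)) := by
  obtain ⟨hnonneg, hs, -⟩ := isJointPMF_iff_of_fintype.1 hp
  have bayes := two_mul_bayesError_le_condEntropy hnonneg hs
  have fano := (isJointPMF_quantJoint hp (mapQuantizer p)).condEntropy_le_hBin_error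
  rw [quantJoint_mapQuantizer_error hs] at fano
  rw [hp.miBits_quantJoint, hp.miBits_eq]
  linarith

lemma IsJointPMF.bayesError_le (hp : IsJointPMF p) : bayesError p ≤ (1 - miBits p) / 2 := by
  obtain ⟨hnonneg, hs, hone⟩ := isJointPMF_iff_of_fintype.1 hp
  have bayes := two_mul_bayesError_le_condEntropy hnonneg hs
  have hbit := hBin_le_one (∑' y, p 1 y)
  rw [← margEntropy_fin_two_of_sum_eq_one hone] at hbit
  linarith [hp.miBits_eq]

theorem IsJointPMF.one_sub_hBin_le_quantMI {β : ℝ} (hp : IsJointPMF p) (hβ : 3 / 5 ≤ β)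
    (hmi : β ≤ miBits p) : 1 - hBin ((1 - β) / 2) ≤ quantMI p 2 := by
  have hnonneg : 0 ≤ bayesError p := tsum_nonneg fun y => le_min (hp.1 0 y) (hp.1 1 y)
  have hle : bayesError p ≤ (1 - β) / 2 := hp.bayesError_le.trans (by linarith)
  have hanti : AntitoneOn (fun s => 2 * s - hBin s) (Set.Icc 0 (1 / 5)) := by
    convert antitoneOn_const_mul_sub_hBin 2 using 2
    norm_num
  calc 1 - hBin ((1 - β) / 2) = β + (2 * ((1 - β) / 2) - hBin ((1 - β) / 2)) := by ring
    _ ≤ miBits p + (2 * bayesError p - hBin (bayesError p)) :=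
        add_le_add hmi (hanti ⟨hnonneg, by linarith⟩ ⟨by linarith, by linarith⟩ hle)
    _ ≤ miBits (quantJoint p (mapQuantizer p)) := hp.miBits_add_two_mul_bayesError_le
    _ ≤ quantMI p 2 := hp.miBits_quantJoint_le_quantMI _

end MaximumAPosteriori

/-! ### The erasure channel -/

/-- Joint law of a uniform bit `X` and the output of an erasure channel with erasure probability
`1 - β`: the letters `0` and `1` reveal `X`, the letter `2` is the erasure symbol, and all other
letters have probability zero. -/
noncomputable def erasure (β : ℝ) (x : Fin 2) : ℕ → ℝ :=
  Pi.single x.val (β / 2) + Pi.single 2 ((1 - β) / 2)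

section Erasure

variable {β : ℝ}

lemma hasSum_erasure (β : ℝ) (x : Fin 2) : HasSum (erasure β x) (1 / 2) := by
  have hmass : β / 2 + (1 - β) / 2 = 1 / 2 := by ring
  exact hmass ▸ (hasSum_pi_single x.val (β / 2)).add (hasSum_pi_single 2 ((1 - β) / 2))

lemma sum_tsum_erasure (β : ℝ) : ∑ x, ∑' y, erasure β x y = 1 := by
  simp only [(hasSum_erasure β _).tsum_eq, Fin.sum_univ_two, add_halves]

lemma isJointPMF_erasure (h0 : 0 ≤ β) (h1 : β ≤ 1) : IsJointPMF (erasure β) := by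
  have hβ : 0 ≤ β / 2 := by linarith
  have hε : 0 ≤ (1 - β) / 2 := by linarith
  have hnonneg (x : Fin 2) : 0 ≤ erasure β x :=
    add_nonneg (Pi.single_nonneg.2 hβ) (Pi.single_nonneg.2 hε)
  exact isJointPMF_iff_of_fintype.2
    ⟨hnonneg, fun x => (hasSum_erasure β x).summable, sum_tsum_erasure β⟩

lemma margEntropy_erasure (β : ℝ) : margEntropy (erasure β) = 1 := by
  rw [margEntropy_fin_two_of_sum_eq_one (sum_tsum_erasure β), (hasSum_erasure β 1).tsum_eq]
  exact (hBin_le_one _).antisymm (by linarith [two_mul_le_hBin (t := 1 / 2) (by norm_num) le_rfl])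

lemma massEntropy_erasure_le (h0 : 0 ≤ β) (h1 : β ≤ 1) (y : ℕ) :
    massEntropy (fun x => erasure β x y) ≤ Pi.single (M := fun _ => ℝ) 2 (1 - β) y := by
  rcases eq_or_ne y 2 with rfl | hy
  · refine (massEntropy_fin_two_le_sum fun x => (isJointPMF_erasure h0 h1).1 x 2).trans_eq ?_
    simp [erasure, Fin.sum_univ_two]
  · rw [Pi.single_eq_of_ne hy, massEntropy_of_subsingleton_support]
    have hsupp {x : Fin 2} (hx : erasure β x y ≠ 0) : y = x.val := by
      by_contra hne
      simp [erasure, hne, hy] at hx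
    exact fun x hx x' hx' => Fin.ext ((hsupp hx).symm.trans (hsupp hx'))

lemma le_miBits_erasure (h0 : 0 ≤ β) (h1 : β ≤ 1) : β ≤ miBits (erasure β) := by
  have hp := isJointPMF_erasure h0 h1
  have hcond : condEntropy (erasure β) ≤ 1 - β :=
    hasSum_le (massEntropy_erasure_le h0 h1)
      (summable_massEntropy hp.1 fun x => (hasSum_erasure β x).summable).hasSum
      (hasSum_pi_single 2 (1 - β))
  rw [hp.miBits_eq, margEntropy_erasure]
  linarith

lemma quantJoint_erasure (β : ℝ) {M : ℕ} (f : ℕ → Fin M) (x : Fin 2) (m : Fin M) :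
    quantJoint (erasure β) f x m =
      (if f x = m then β / 2 else 0) + if f 2 = m then (1 - β) / 2 else 0 := by
  have hcell : (fun y => if f y = m then erasure β x y else 0) =
      Pi.single x.val (if f x = m then β / 2 else 0) +
        Pi.single 2 (if f 2 = m then (1 - β) / 2 else 0) := by
    ext y
    have hx : x.val ≠ 2 := x.isLt.ne
    rcases eq_or_ne y x.val with rfl | hyx
    · simp [erasure, hx]
    rcases eq_or_ne y 2 with rfl | hy2
    · simp [erasure, hx.symm]
    · simp [erasure, hyx, hy2]
  rw [quantJoint, hcell]
  exact ((hasSum_pi_single _ _).add (hasSum_pi_single _ _)).tsum_eq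

lemma massEntropy_quantJoint_erasure (β : ℝ) {M : ℕ} {f : ℕ → Fin M} {i j : Fin 2}
    (hi : f i ≠ f 2) (hj : f j = f 2) :
    massEntropy (fun x => quantJoint (erasure β) f x (f 2)) =
      (2 - β) / 2 * hBin ((1 - β) / (2 - β)) := by
  have hmass_i : quantJoint (erasure β) f i (f 2) = (1 - β) / 2 := by
    simp [quantJoint_erasure, hi]
  have hmass : ∑ x, quantJoint (erasure β) f x (f 2) = (2 - β) / 2 := by
    have hij : i ≠ j := fun h => hi (h ▸ hj)
    rw [Fintype.sum_eq_add i j hij (by omega)]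
    simp only [quantJoint_erasure, hi, hj, if_true, if_false]
    ring
  rw [massEntropy_fin_two _ i, hmass, hmass_i, div_div_div_cancel_right₀ two_ne_zero]

lemma one_le_condEntropy_quantJoint_erasure (h0 : 0 ≤ β) (h1 : β ≤ 1) {M : ℕ} {f : ℕ → Fin M}
    (hf : f 0 = f 1) : 1 ≤ condEntropy (quantJoint (erasure β) f) := by
  have hrows : quantJoint (erasure β) f 1 = quantJoint (erasure β) f 0 := by
    ext m
    simp [quantJoint_erasure, hf]
  have herr : bayesError (quantJoint (erasure β) f) = 1 / 2 := by
    simp only [bayesError, hrows, min_self, tsum_fintype]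
    rw [sum_quantJoint (hasSum_erasure β 0).summable, (hasSum_erasure β 0).tsum_eq]
  have bayes := two_mul_bayesError_le_condEntropy
    (isJointPMF_quantJoint (isJointPMF_erasure h0 h1) f).1 fun x => Summable.of_finite
  linarith

lemma le_condEntropy_quantJoint_erasure (h0 : 0 ≤ β) (h1 : β ≤ 1) (f : ℕ → Fin 2) :
    (2 - β) / 2 * hBin ((1 - β) / (2 - β)) ≤ condEntropy (quantJoint (erasure β) f) := by
  by_cases hf : f 0 = f 1
  · calc (2 - β) / 2 * hBin ((1 - β) / (2 - β)) ≤ (2 - β) / 2 :=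
          mul_le_of_le_one_right (by linarith) (hBin_le_one _)
      _ ≤ 1 := by linarith
      _ ≤ condEntropy (quantJoint (erasure β) f) := one_le_condEntropy_quantJoint_erasure h0 h1 hf
  · obtain ⟨i, j, hi, hj⟩ : ∃ i j : Fin 2, f i ≠ f 2 ∧ f j = f 2 := by
      by_cases h : f 0 = f 2
      · exact ⟨1, 0, fun h' => hf (h.trans h'.symm), h⟩
      · exact ⟨0, 1, h, show f 1 = f 2 by omega⟩
    rw [← massEntropy_quantJoint_erasure β hi hj]
    exact massEntropy_le_condEntropy (isJointPMF_quantJoint (isJointPMF_erasure h0 h1) f).1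
      (fun x => Summable.of_finite) (f 2)

lemma quantMI_erasure_le (h0 : 0 ≤ β) (h1 : β ≤ 1) :
    quantMI (erasure β) 2 ≤ 1 - (2 - β) / 2 * hBin ((1 - β) / (2 - β)) := by
  refine ciSup_le fun f => ?_
  rw [(isJointPMF_erasure h0 h1).miBits_quantJoint, margEntropy_erasure]
  exact sub_le_sub_left (le_condEntropy_quantJoint_erasure h0 h1 f) 1

end Erasure

/-- Proposition 2: bounds on `ID_2(2, β)` in the high mutual information regime. -/
theorem ID_two_levels_high_beta (β : ℝ) (h1 : 3 / 5 ≤ β) (h2 : β ≤ 1) :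
    1 - hBin ((1 - β) / 2) ≤ ID 2 2 β ∧
    ID 2 2 β ≤ 1 - (2 - β) / 2 * hBin ((1 - β) / (2 - β)) := by
  have h0 : 0 ≤ β := by linarith
  have herasure := isJointPMF_erasure h0 h2
  have hmi := le_miBits_erasure h0 h2
  constructor
  · refine le_csInf ⟨_, erasure β, herasure, hmi, rfl⟩ ?_
    rintro _ ⟨p, hp, hpmi, rfl⟩
    exact hp.one_sub_hBin_le_quantMI h1 hpmi
  · exact (ID_le_quantMI herasure hmi 2).trans (quantMI_erasure_le h0 h2)
end
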